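/- Let f be a probability density on [0,1] that is twice continuously differentiable with bounded second derivative. With h = 1/m, B_j = [(j−1)h, jh), p_j = ∫_{B_j} f, and bias b(x) = p_j/h − f(x) for x ∈ B_j, one has ∫_0^1 b(x)² dx = (h²/12) ∫_0^1 (f'(x))² dx + O(h³) as m → ∞; in particular ∫_0^1 b(x)² dx = (h²/12) ∫_0^1 (f'(x))² dx + o(h²). -/

import Mathlib

/-!
On a bin with midpoint `c` and length `h`, replace `f'` by a constant `D`, at the cost of an error
`ε` in the derivative. The bias is linear in `f`: the part `x ↦ D x` contributes `D (c - x)`, whose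
square integrates to `D² h³ / 12`, and the rest, being `ε`-Lipschitz, contributes at most `ε h`.
Summed over the bins, `D² h³ / 12` is `h² / 12` times a Riemann sum for `∫ f'²`; when `f'` is
Lipschitz, `ε` is of order `h`, and so each of the `1 / h` bins contributes an error of order `h⁴`.
-/

open MeasureTheory Filter

theorem abs_sq_sub_sq_le_of_abs_sub_le {R : Type*} [CommRing R] [LinearOrder R]
    [IsStrictOrderedRing R] {x y B δ : R} (hy : |y| ≤ B) (hxy : |x - y| ≤ δ) :
    |x ^ 2 - y ^ 2| ≤ δ * (2 * B + δ) := by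
  have hδ : 0 ≤ δ := (abs_nonneg _).trans hxy
  calc |x ^ 2 - y ^ 2| = |x - y| * |2 * y + (x - y)| := by rw [← abs_mul]; ring_nf
    _ ≤ |x - y| * (2 * |y| + |x - y|) := by
      gcongr
      simpa [abs_mul] using abs_add_le (2 * y) (x - y)
    _ ≤ δ * (2 * B + δ) := by gcongr

section Average

variable {E : Type*} [NormedAddCommGroup E] [NormedSpace ℝ E] {a b C ε : ℝ} {c D : E}
  {f f' : ℝ → E}

theorem norm_interval_average_sub_le_of_norm_sub_le [CompleteSpace E] (hab : a < b)
    (hf : IntervalIntegrable f volume a b) (hC : ∀ x ∈ Set.Icc a b, ‖f x - c‖ ≤ C) :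
    ‖(⨍ x in a..b, f x) - c‖ ≤ C := by
  rw [← mem_closedBall_iff_norm, Set.uIoc_of_le hab.le]
  refine (convex_closedBall c C).set_average_mem Metric.isClosed_closedBall (by simp [hab])
    measure_Ioc_lt_top.ne (ae_restrict_of_forall_mem measurableSet_Ioc fun x hx => ?_) hf.1
  exact mem_closedBall_iff_norm.2 (hC x (Set.Ioc_subset_Icc_self hx))

theorem norm_sub_sub_smul_le_of_norm_hasDerivWithinAt_sub_le {s : Set ℝ} (hs : Convex ℝ s)
    (hf : ∀ x ∈ s, HasDerivWithinAt f (f' x) s x) (hε : ∀ x ∈ s, ‖f' x - D‖ ≤ ε) {x y : ℝ}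
    (hx : x ∈ s) (hy : y ∈ s) : ‖f y - f x - (y - x) • D‖ ≤ ε * |y - x| := by
  have hg : ∀ z ∈ s, HasDerivWithinAt (fun z => f z - z • D) (f' z - D) s z := fun z hz =>
    (hf z hz).sub (by simpa using (hasDerivWithinAt_id z s).smul_const D)
  have hLip := hs.norm_image_sub_le_of_norm_hasDerivWithin_le hg hε hx hy
  rwa [sub_sub_sub_comm, ← sub_smul, Real.norm_eq_abs] at hLip

theorem interval_average_sub_smul [CompleteSpace E] (hab : a < b)
    (hf : IntervalIntegrable f volume a b) (x : ℝ) (D : E) :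
    ⨍ y in a..b, (f y - (y - x) • D) = (⨍ y in a..b, f y) - ((a + b) / 2 - x) • D := by
  have hb : b - a ≠ 0 := (sub_pos.2 hab).ne'
  have hlin : Continuous fun y : ℝ => (y - x) • D := by fun_prop
  have hmid : ∫ y in a..b, (y - x) = (b - a) * ((a + b) / 2 - x) := by
    rw [intervalIntegral.integral_comp_sub_right fun y => y, integral_id]
    ring
  rw [interval_average_eq, interval_average_eq,
    intervalIntegral.integral_sub hf (hlin.intervalIntegrable _ _),
    intervalIntegral.integral_smul_const, hmid, smul_sub, smul_smul, inv_mul_cancel_left₀ hb]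

theorem norm_interval_average_sub_sub_smul_le [CompleteSpace E] (hab : a < b)
    (hf : ∀ x ∈ Set.Icc a b, HasDerivWithinAt f (f' x) (Set.Icc a b) x)
    (hε : ∀ x ∈ Set.Icc a b, ‖f' x - D‖ ≤ ε) {x : ℝ} (hx : x ∈ Set.Icc a b) :
    ‖(⨍ y in a..b, f y) - f x - ((a + b) / 2 - x) • D‖ ≤ ε * (b - a) := by
  have hfi : IntervalIntegrable f volume a b :=
    ContinuousOn.intervalIntegrable_of_Icc hab.le fun y hy => (hf y hy).continuousWithinAt
  have hlin : Continuous fun y : ℝ => (y - x) • D := by fun_prop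
  have hε0 : 0 ≤ ε := (norm_nonneg _).trans (hε x hx)
  rw [sub_right_comm, ← interval_average_sub_smul hab hfi]
  refine norm_interval_average_sub_le_of_norm_sub_le hab
    (hfi.sub (hlin.intervalIntegrable _ _)) fun y hy => ?_
  calc ‖f y - (y - x) • D - f x‖ = ‖f y - f x - (y - x) • D‖ := by rw [sub_right_comm]
    _ ≤ ε * |y - x| := norm_sub_sub_smul_le_of_norm_hasDerivWithinAt_sub_le
        (convex_Icc a b) hf hε hx hy
    _ ≤ ε * (b - a) := by gcongr; exact Real.dist_le_of_mem_Icc hy hx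

theorem norm_integral_sub_integral_le_of_norm_sub_le {g : ℝ → E} (hab : a ≤ b)
    (hf : IntervalIntegrable f volume a b) (hg : IntervalIntegrable g volume a b)
    (hC : ∀ x ∈ Set.Icc a b, ‖f x - g x‖ ≤ C) :
    ‖(∫ x in a..b, f x) - ∫ x in a..b, g x‖ ≤ C * (b - a) := by
  rw [← intervalIntegral.integral_sub hf hg, ← abs_of_nonneg (sub_nonneg.2 hab)]
  refine intervalIntegral.norm_integral_le_of_norm_le_const fun x hx => hC x ?_
  exact Set.Ioc_subset_Icc_self (Set.uIoc_of_le hab ▸ hx)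

end Average

section Interval

variable {a b D ε : ℝ} {f f' : ℝ → ℝ}

theorem integral_midpoint_sub_sq (a b : ℝ) :
    ∫ x in a..b, ((a + b) / 2 - x) ^ 2 = (b - a) ^ 3 / 12 := by
  rw [intervalIntegral.integral_comp_sub_left fun x => x ^ 2, integral_pow]
  ring

theorem abs_integral_average_sub_sq_sub_le (hab : a < b)
    (hf : ∀ x ∈ Set.Icc a b, HasDerivWithinAt f (f' x) (Set.Icc a b) x)
    (hε : ∀ x ∈ Set.Icc a b, |f' x - D| ≤ ε) :
    |(∫ x in a..b, ((⨍ y in a..b, f y) - f x) ^ 2) - D ^ 2 * ((b - a) ^ 3 / 12)|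
      ≤ ε * (|D| + ε) * (b - a) ^ 3 := by
  have hfc : ContinuousOn f (Set.Icc a b) := fun x hx => (hf x hx).continuousWithinAt
  have hpoint : ∀ x ∈ Set.Icc a b,
      |((⨍ y in a..b, f y) - f x) ^ 2 - (((a + b) / 2 - x) * D) ^ 2|
        ≤ ε * (|D| + ε) * (b - a) ^ 2 := fun x hx => by
    have hlin : |((a + b) / 2 - x) * D| ≤ (b - a) / 2 * |D| := by
      rw [abs_mul]
      gcongr
      rw [abs_le]
      constructor <;> linarith [hx.1, hx.2]
    have hrem := norm_interval_average_sub_sub_smul_le hab hf hε hx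
    exact (abs_sq_sub_sq_le_of_abs_sub_le hlin hrem).trans_eq (by ring)
  have hmodel : ∫ x in a..b, (((a + b) / 2 - x) * D) ^ 2 = D ^ 2 * ((b - a) ^ 3 / 12) := by
    simp only [mul_pow]
    rw [intervalIntegral.integral_mul_const, integral_midpoint_sub_sq, mul_comm]
  rw [← hmodel]
  refine (norm_integral_sub_integral_le_of_norm_sub_le hab.le
    (((continuousOn_const.sub hfc).pow 2).intervalIntegrable_of_Icc hab.le)
    (Continuous.intervalIntegrable (by fun_prop) _ _) hpoint).trans_eq (by ring)

theorem abs_integral_sq_sub_le (hab : a ≤ b)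
    (hf' : IntervalIntegrable (fun x => f' x ^ 2) volume a b)
    (hε : ∀ x ∈ Set.Icc a b, |f' x - D| ≤ ε) :
    |(∫ x in a..b, f' x ^ 2) - D ^ 2 * (b - a)| ≤ ε * (2 * |D| + ε) * (b - a) := by
  simpa [mul_comm] using norm_integral_sub_integral_le_of_norm_sub_le hab hf'
    intervalIntegrable_const fun x hx => abs_sq_sub_sq_le_of_abs_sub_le le_rfl (hε x hx)

theorem abs_integral_average_sub_sq_sub_integral_deriv_sq_le (hab : a < b)
    (hf : ∀ x ∈ Set.Icc a b, HasDerivWithinAt f (f' x) (Set.Icc a b) x)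
    (hf' : IntervalIntegrable (fun x => f' x ^ 2) volume a b)
    (hε : ∀ x ∈ Set.Icc a b, |f' x - D| ≤ ε) :
    |(∫ x in a..b, ((⨍ y in a..b, f y) - f x) ^ 2) - (b - a) ^ 2 / 12 * ∫ x in a..b, f' x ^ 2|
      ≤ 2 * ε * (|D| + ε) * (b - a) ^ 3 := by
  have : 0 ≤ b - a := sub_nonneg.2 hab.le
  have hε0 : 0 ≤ ε := (abs_nonneg _).trans (hε a (Set.left_mem_Icc.2 hab.le))
  have hbias := abs_integral_average_sub_sq_sub_le hab hf hε
  have hderiv : |D ^ 2 * ((b - a) ^ 3 / 12) - (b - a) ^ 2 / 12 * ∫ x in a..b, f' x ^ 2|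
      ≤ (b - a) ^ 2 / 12 * (ε * (2 * |D| + ε) * (b - a)) :=
    calc _ = |(b - a) ^ 2 / 12 * (D ^ 2 * (b - a) - ∫ x in a..b, f' x ^ 2)| := by ring_nf
      _ = (b - a) ^ 2 / 12 * |(∫ x in a..b, f' x ^ 2) - D ^ 2 * (b - a)| := by
        rw [abs_mul, abs_of_nonneg (by positivity), abs_sub_comm]
      _ ≤ _ := by gcongr; exact abs_integral_sq_sub_le hab.le hf' hε
  calc _ ≤ ε * (|D| + ε) * (b - a) ^ 3 + (b - a) ^ 2 / 12 * (ε * (2 * |D| + ε) * (b - a)) :=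
        (abs_sub_le _ _ _).trans (add_le_add hbias hderiv)
    _ = 2 * ε * (|D| + ε) * (b - a) ^ 3 - ε * (10 * |D| + 11 * ε) * (b - a) ^ 3 / 12 := by ring
    _ ≤ _ := sub_le_self _ (by positivity)

end Interval

section Histogram

variable {f f' : ℝ → ℝ} {m k : ℕ}

/-- The bias at `x` of the histogram with `m` bins of length `1 / m`: the bin containing `x` is the
one with left endpoint `⌊x * m⌋ / m`, and multiplication by `m` is division by the bin length. -/
noncomputable def histogramBias (f : ℝ → ℝ) (m : ℕ) (x : ℝ) : ℝ :=
  (∫ u in Set.Ico ((⌊x * (m : ℝ)⌋ : ℝ) / m) (((⌊x * (m : ℝ)⌋ : ℝ) + 1) / m), f u) * m - f x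

/-- The error of the approximation of the integrated squared bias of the histogram with `m` bins on
`[0, 1]` by `h² / 12 * ∫ f'²`, where `h = 1 / m` and `f'` stands for the derivative of `f`. -/
noncomputable def histogramBiasRemainder (f f' : ℝ → ℝ) (m : ℕ) : ℝ :=
  (∫ x in Set.Icc (0 : ℝ) 1, histogramBias f m x ^ 2)
    - (1 / m : ℝ) ^ 2 / 12 * ∫ x in Set.Icc (0 : ℝ) 1, f' x ^ 2

theorem div_lt_add_one_div (hm : 0 < m) (k : ℕ) : (k : ℝ) / m < (k + 1) / m := by
  gcongr
  exact lt_add_one _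

theorem Icc_div_add_one_div_subset (hk : k < m) :
    Set.Icc ((k : ℝ) / m) ((k + 1) / m) ⊆ Set.Icc 0 1 := by
  refine Set.Icc_subset_Icc (by positivity) (div_le_one_of_le₀ ?_ m.cast_nonneg)
  exact_mod_cast hk

theorem histogramBias_eqOn_average_sub (hm : 0 < m) :
    Set.EqOn (histogramBias f m) (fun x => (⨍ u in (k / m : ℝ)..((k + 1) / m), f u) - f x)
      (Set.Ioo (k / m) ((k + 1) / m)) := by
  intro x hx
  have hm' : (0 : ℝ) < m := Nat.cast_pos.2 hm
  have hfloor : ⌊x * (m : ℝ)⌋ = (k : ℤ) := by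
    rw [Int.floor_eq_iff, Int.cast_natCast]
    exact ⟨((div_lt_iff₀ hm').1 hx.1).le, (lt_div_iff₀ hm').1 hx.2⟩
  have hlen : ((k + 1) / m - k / m : ℝ)⁻¹ = m := by
    rw [← sub_div, add_sub_cancel_left, one_div, inv_inv]
  simp only [histogramBias, hfloor, Int.cast_natCast]
  rw [interval_average_eq, hlen, smul_eq_mul, mul_comm, integral_Ico_eq_integral_Ioc,
    intervalIntegral.integral_of_le (div_lt_add_one_div hm k).le]

theorem intervalIntegrable_histogramBias_sq (hm : 0 < m)
    (hf : ContinuousOn f (Set.Icc (k / m) ((k + 1) / m))) :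
    IntervalIntegrable (fun x => histogramBias f m x ^ 2) volume (k / m) ((k + 1) / m) := by
  have hle := (div_lt_add_one_div hm k).le
  have havg : ContinuousOn (fun x => ((⨍ u in (k / m : ℝ)..((k + 1) / m), f u) - f x) ^ 2)
      (Set.Icc (k / m) ((k + 1) / m)) := (continuousOn_const.sub hf).pow 2
  refine (havg.intervalIntegrable_of_Icc hle).congr_uIoo fun x hx => ?_
  rw [Set.uIoo_of_le hle] at hx
  exact congrArg (· ^ 2) (histogramBias_eqOn_average_sub hm hx).symm

theorem abs_integral_histogramBias_sq_sub_le {D ε : ℝ} (hm : 0 < m)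
    (hf : ∀ x ∈ Set.Icc (k / m : ℝ) ((k + 1) / m),
      HasDerivWithinAt f (f' x) (Set.Icc (k / m) ((k + 1) / m)) x)
    (hf' : IntervalIntegrable (fun x => f' x ^ 2) volume (k / m) ((k + 1) / m))
    (hε : ∀ x ∈ Set.Icc (k / m : ℝ) ((k + 1) / m), |f' x - D| ≤ ε) :
    |(∫ x in (k / m : ℝ)..((k + 1) / m), histogramBias f m x ^ 2)
        - (1 / m : ℝ) ^ 2 / 12 * ∫ x in (k / m : ℝ)..((k + 1) / m), f' x ^ 2|
      ≤ 2 * ε * (|D| + ε) * (1 / m) ^ 3 := by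
  have hlt := div_lt_add_one_div hm k
  have hlen : (1 / m : ℝ) = (k + 1) / m - k / m := by ring
  rw [hlen, intervalIntegral.integral_congr_Ioo_of_le hlt.le fun x hx =>
    congrArg (· ^ 2) (histogramBias_eqOn_average_sub hm hx)]
  exact abs_integral_average_sub_sq_sub_integral_deriv_sq_le hlt hf hf' hε

theorem integral_Icc_zero_one_eq_sum {E : Type*} [NormedAddCommGroup E] [NormedSpace ℝ E]
    {φ : ℝ → E} (hm : 0 < m)
    (hφ : ∀ k < m, IntervalIntegrable φ volume (k / m) ((k + 1) / m)) :
    ∫ x in Set.Icc (0 : ℝ) 1, φ x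
      = ∑ k ∈ Finset.range m, ∫ x in (k / m : ℝ)..((k + 1) / m), φ x := by
  have hsum := intervalIntegral.sum_integral_adjacent_intervals (μ := volume) (f := φ)
    (a := fun k => (k : ℝ) / m) (n := m) fun k hk => by exact_mod_cast hφ k hk
  have hm' : (m : ℝ) ≠ 0 := Nat.cast_ne_zero.2 hm.ne'
  simp only [Nat.cast_add, Nat.cast_one, Nat.cast_zero, zero_div, div_self hm'] at hsum
  rw [hsum, integral_Icc_eq_integral_Ioc, intervalIntegral.integral_of_le zero_le_one]

theorem abs_histogramBiasRemainder_le {K ε : ℝ} (hm : 0 < m)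
    (hf : ∀ x ∈ Set.Icc (0 : ℝ) 1, HasDerivWithinAt f (f' x) (Set.Icc 0 1) x)
    (hf' : IntegrableOn (fun x => f' x ^ 2) (Set.Icc 0 1))
    (hK : ∀ x ∈ Set.Icc (0 : ℝ) 1, |f' x| ≤ K)
    (hε : ∀ x ∈ Set.Icc (0 : ℝ) 1, ∀ y ∈ Set.Icc (0 : ℝ) 1, |x - y| ≤ 1 / m →
      |f' x - f' y| ≤ ε) :
    |histogramBiasRemainder f f' m| ≤ 2 * ε * (K + ε) * (1 / m) ^ 2 := by
  have hε0 : 0 ≤ ε := (abs_nonneg _).trans (hε 0 (by simp) 0 (by simp) (by simp))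
  have hle (k : ℕ) : (k / m : ℝ) ≤ (k + 1) / m := (div_lt_add_one_div hm k).le
  have hfbin : ∀ k < m, ∀ x ∈ Set.Icc (k / m : ℝ) ((k + 1) / m),
      HasDerivWithinAt f (f' x) (Set.Icc (k / m) ((k + 1) / m)) x := fun k hk x hx =>
    (hf x (Icc_div_add_one_div_subset hk hx)).mono (Icc_div_add_one_div_subset hk)
  have hbiasInt : ∀ k < m, IntervalIntegrable (fun x => histogramBias f m x ^ 2) volume
      (k / m) ((k + 1) / m) := fun k hk =>
    intervalIntegrable_histogramBias_sq hm fun x hx => (hfbin k hk x hx).continuousWithinAt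
  have hderivInt : ∀ k < m, IntervalIntegrable (fun x => f' x ^ 2) volume
      (k / m) ((k + 1) / m) := fun k hk =>
    (intervalIntegrable_iff_integrableOn_Icc_of_le (hle k)).2
      (hf'.mono_set (Icc_div_add_one_div_subset hk))
  have hbin : ∀ k ∈ Finset.range m,
      |(∫ x in (k / m : ℝ)..((k + 1) / m), histogramBias f m x ^ 2)
          - (1 / m : ℝ) ^ 2 / 12 * ∫ x in (k / m : ℝ)..((k + 1) / m), f' x ^ 2|
        ≤ 2 * ε * (K + ε) * (1 / m) ^ 3 := fun k hk => by
    rw [Finset.mem_range] at hk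
    have hsub := Icc_div_add_one_div_subset hk
    have hleft := Set.left_mem_Icc.2 (hle k)
    have hosc : ∀ x ∈ Set.Icc (k / m : ℝ) ((k + 1) / m), |f' x - f' (k / m)| ≤ ε := fun x hx =>
      hε x (hsub hx) _ (hsub hleft) ((Real.dist_le_of_mem_Icc hx hleft).trans_eq (by ring))
    refine (abs_integral_histogramBias_sq_sub_le hm (hfbin k hk) (hderivInt k hk) hosc).trans ?_
    gcongr
    exact hK _ (hsub hleft)
  rw [histogramBiasRemainder, integral_Icc_zero_one_eq_sum hm hbiasInt,
    integral_Icc_zero_one_eq_sum hm hderivInt, Finset.mul_sum, ← Finset.sum_sub_distrib]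
  refine (Finset.abs_sum_le_sum_abs _ _).trans ((Finset.sum_le_card_nsmul _ _ _ hbin).trans_eq ?_)
  rw [Finset.card_range, nsmul_eq_mul]
  field_simp

theorem exists_abs_histogramBiasRemainder_le_mul_pow_three {L : NNReal}
    (hf : ∀ x ∈ Set.Icc (0 : ℝ) 1, HasDerivWithinAt f (f' x) (Set.Icc 0 1) x)
    (hf' : LipschitzOnWith L f' (Set.Icc 0 1)) :
    ∃ C : ℝ, ∀ m : ℕ, 1 ≤ m → |histogramBiasRemainder f f' m| ≤ C * (1 / m) ^ 3 := by
  obtain ⟨K, hK⟩ := isCompact_Icc.exists_bound_of_continuousOn hf'.continuousOn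
  refine ⟨2 * L * (K + L), fun m hm => ?_⟩
  have hosc : ∀ x ∈ Set.Icc (0 : ℝ) 1, ∀ y ∈ Set.Icc (0 : ℝ) 1, |x - y| ≤ 1 / m →
      |f' x - f' y| ≤ L * (1 / m) := fun x hx y hy hxy =>
    (hf'.dist_le_mul x hx y hy).trans (by gcongr; exact hxy)
  have hh : (L : ℝ) * (1 / m) ≤ L :=
    mul_le_of_le_one_right L.2 (div_le_one_of_le₀ (by exact_mod_cast hm) m.cast_nonneg)
  calc |histogramBiasRemainder f f' m|
      ≤ 2 * (L * (1 / m)) * (K + L * (1 / m)) * (1 / m) ^ 2 :=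
        abs_histogramBiasRemainder_le hm hf
          (hf'.continuousOn.pow 2).integrableOn_Icc hK hosc
    _ ≤ 2 * (L * (1 / m)) * (K + L) * (1 / m) ^ 2 := by gcongr
    _ = 2 * L * (K + L) * (1 / m) ^ 3 := by ring

end Histogram

theorem tendsto_div_one_div_pow_of_abs_le {e : ℕ → ℝ} {C : ℝ} {p : ℕ}
    (he : ∀ m : ℕ, 1 ≤ m → |e m| ≤ C * (1 / m) ^ (p + 1)) :
    Tendsto (fun m : ℕ => e m / (1 / m : ℝ) ^ p) atTop (nhds 0) := by
  refine squeeze_zero_norm' ?_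
    (by simpa using tendsto_one_div_atTop_nhds_zero_nat.const_mul C :
      Tendsto (fun m : ℕ => C * (1 / m : ℝ)) atTop (nhds 0))
  filter_upwards [eventually_ge_atTop 1] with m hm
  have hpow : (0 : ℝ) < (1 / m) ^ p := by positivity
  rw [norm_div, Real.norm_of_nonneg hpow.le, div_le_iff₀ hpow]
  exact (he m hm).trans_eq (by ring)

theorem lipschitzWith_deriv_of_nnnorm_iteratedDeriv_two_le {𝕜 E : Type*} [RCLike 𝕜]
    [NormedAddCommGroup E] [NormedSpace 𝕜 E] {f : 𝕜 → E} {L : NNReal}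
    (hf : Differentiable 𝕜 (deriv f)) (hL : ∀ x, ‖iteratedDeriv 2 f x‖₊ ≤ L) :
    LipschitzWith L (deriv f) :=
  lipschitzWith_of_nnnorm_deriv_le hf fun x => by
    simpa only [iteratedDeriv_succ, iteratedDeriv_zero] using hL x

theorem histogram_integrated_squared_bias_general {f f' : ℝ → ℝ} {L : NNReal}
    (hf : ∀ x ∈ Set.Icc (0 : ℝ) 1, HasDerivWithinAt f (f' x) (Set.Icc 0 1) x)
    (hf' : LipschitzOnWith L f' (Set.Icc 0 1)) :
    (∃ C : ℝ, ∀ m : ℕ, 1 ≤ m → |histogramBiasRemainder f f' m| ≤ C * (1 / m) ^ 3) ∧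
    Tendsto (fun m : ℕ => histogramBiasRemainder f f' m / (1 / m : ℝ) ^ 2) atTop (nhds 0) := by
  obtain ⟨C, hC⟩ := exists_abs_histogramBiasRemainder_le_mul_pow_three hf hf'
  exact ⟨⟨C, hC⟩, tendsto_div_one_div_pow_of_abs_le hC⟩

/-- Integrated squared bias of the histogram: for a probability density `f` on `[0,1]`,
twice continuously differentiable with bounded second derivative, with `h = 1/m`,
bins `Bⱼ = [(j-1)h, jh)`, `pⱼ = ∫_{Bⱼ} f`, and bias `b x = p_{j(x)}/h - f x` (where
`j(x)` indexes the bin containing `x`, so `p_{j(x)}/h = m ∫_{⌊xm⌋/m}^{(⌊xm⌋+1)/m} f`),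
one has `∫₀¹ b² = (h²/12) ∫₀¹ (f')² + O(h³)` as `m → ∞`; in particular
`∫₀¹ b² = (h²/12) ∫₀¹ (f')² + o(h²)`. -/
theorem histogram_integrated_squared_bias
    (f : ℝ → ℝ) (M : ℝ)
    (hf : ContDiff ℝ 2 f)
    (hf'' : ∀ x, |iteratedDeriv 2 f x| ≤ M)
    (hf_nonneg : ∀ x, 0 ≤ f x)
    (hf_int : ∫ x in Set.Icc (0:ℝ) 1, f x = 1) :
    (∃ C : ℝ, ∀ m : ℕ, 1 ≤ m →
      |(∫ x in Set.Icc (0:ℝ) 1,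
            ((∫ u in Set.Ico ((⌊x * (m : ℝ)⌋ : ℝ) / m) (((⌊x * (m : ℝ)⌋ : ℝ) + 1) / m), f u)
              * m - f x) ^ 2)
          - (1 / m : ℝ) ^ 2 / 12 * ∫ x in Set.Icc (0:ℝ) 1, (deriv f x) ^ 2|
        ≤ C * (1 / m) ^ 3) ∧
    Tendsto (fun m : ℕ =>
        ((∫ x in Set.Icc (0:ℝ) 1,
            ((∫ u in Set.Ico ((⌊x * (m : ℝ)⌋ : ℝ) / m) (((⌊x * (m : ℝ)⌋ : ℝ) + 1) / m), f u)
              * m - f x) ^ 2)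
          - (1 / m : ℝ) ^ 2 / 12 * ∫ x in Set.Icc (0:ℝ) 1, (deriv f x) ^ 2)
        / (1 / m : ℝ) ^ 2)
      atTop (nhds 0) := by
  have hLip : LipschitzWith M.toNNReal (deriv f) :=
    lipschitzWith_deriv_of_nnnorm_iteratedDeriv_two_le hf.differentiable_deriv_two fun x =>
      NNReal.le_toNNReal_of_coe_le (hf'' x)
  exact histogram_integrated_squared_bias_general
    (fun x _ => (hf.differentiable two_ne_zero x).hasDerivAt.hasDerivWithinAt) hLip.lipschitzOnWith
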